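/- arXiv:1907.09922 — 2 statements merged into one kernel-verified Lean document; each statement's English description precedes it below -/
import Mathlib

section
/- For every a ≥ 1 and every b ≥ 0 there exists a constant C ≥ 1 such that for all t ∈ ℝ and all Schwartz functions f : ℝ → ℂ: ‖ ⟨·⟩^{-a} ⟨∇⟩^{-b} e^{±it⟨∇⟩} ( ⟨·⟩^{-a} f ) ‖_{L²(ℝ)} ≤ C ⟨t⟩^{-1/2} ‖f‖_{L²(ℝ)}. -/
open MeasureTheory

/-- Fourier transform with the convention `ĥ(ξ) = (2π)^{-1/2} ∫ e^{-ixξ} h(x) dx`. -/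
noncomputable def FT (h : ℝ → ℂ) (ξ : ℝ) : ℂ :=
  (Real.sqrt (2 * Real.pi) : ℂ)⁻¹ * ∫ x : ℝ, Complex.exp (-(Complex.I * x * ξ)) * h x

/-- Inverse Fourier transform `(2π)^{-1/2} ∫ e^{+ixξ} h(ξ) dξ`. -/
noncomputable def IFT (h : ℝ → ℂ) (x : ℝ) : ℂ :=
  (Real.sqrt (2 * Real.pi) : ℂ)⁻¹ * ∫ ξ : ℝ, Complex.exp (Complex.I * x * ξ) * h ξ

/-- Japanese bracket `⟨x⟩ = (1+x²)^{1/2}`. -/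
noncomputable def jap (x : ℝ) : ℝ := Real.sqrt (1 + x ^ 2)

/-- Fourier multiplier operator with symbol `m`: `m(D)h = ℱ^{-1}(m(ξ) ĥ(ξ))`. -/
noncomputable def Mop (m : ℝ → ℂ) (h : ℝ → ℂ) : ℝ → ℂ :=
  IFT (fun ξ => m ξ * FT h ξ)

/-- The `L²(ℝ)` norm. -/
noncomputable def L2C (h : ℝ → ℂ) : ℝ := Real.sqrt (∫ x : ℝ, ‖h x‖ ^ 2)

open scoped FourierTransform SchwartzMap ContDiff

namespace KG

lemma one_le_jap (x : ℝ) : 1 ≤ jap x := by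
  unfold jap
  rw [Real.one_le_sqrt]
  nlinarith [sq_nonneg x]

lemma jap_pos (x : ℝ) : 0 < jap x := lt_of_lt_of_le one_pos (one_le_jap x)

lemma jap_rpow (x c : ℝ) : jap x ^ c = (1 + x ^ 2) ^ (c / 2) := by
  unfold jap
  rw [Real.sqrt_eq_rpow, ← Real.rpow_mul (by positivity)]
  congr 1; ring

lemma jap_eq (x : ℝ) : jap x = (1 + x ^ 2) ^ ((1 : ℝ) / 2) := by
  unfold jap
  rw [Real.sqrt_eq_rpow]

lemma tg_jap_rpow (c : ℝ) : (fun x : ℝ => jap x ^ c).HasTemperateGrowth := by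
  have := Function.hasTemperateGrowth_one_add_norm_sq_rpow ℝ (c / 2)
  simpa [jap_rpow] using this

lemma tg_jap : jap.HasTemperateGrowth := by
  simpa using tg_jap_rpow 1

lemma tg_jap_rpow_c (c : ℝ) : (fun x : ℝ => ((jap x ^ c : ℝ) : ℂ)).HasTemperateGrowth :=
  Function.Complex.hasTemperateGrowth_ofReal.comp (tg_jap_rpow c)

lemma iter_exp (n : ℕ) : iteratedDeriv n (fun s : ℝ => Complex.exp (Complex.I * s))
    = fun s : ℝ => Complex.I ^ n * Complex.exp (Complex.I * s) := by
  induction n with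
  | zero => simp
  | succ n ih =>
    rw [iteratedDeriv_succ, ih]
    funext s
    have h : HasDerivAt (fun s : ℝ => Complex.I * (s : ℂ)) (Complex.I * 1) s :=
      (Complex.ofRealCLM.hasDerivAt).const_mul _
    rw [(h.cexp.const_mul _).deriv]
    ring

lemma tg_exp : (fun s : ℝ => Complex.exp (Complex.I * s)).HasTemperateGrowth := by
  refine ⟨by
    have : ContDiff ℝ ∞ (fun s : ℝ => (s : ℂ)) := Complex.ofRealCLM.contDiff
    fun_prop, fun n => ⟨0, 1, fun x => ?_⟩⟩
  rw [norm_iteratedFDeriv_eq_norm_iteratedDeriv, iter_exp]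
  simp [Complex.norm_exp]

/-- the symbol -/
noncomputable def sym (b l : ℝ) (ξ : ℝ) : ℂ :=
  ((jap ξ ^ (-b) : ℝ) : ℂ) * Complex.exp (Complex.I * ((l * jap ξ : ℝ) : ℂ))

lemma tg_sym (b l : ℝ) : (sym b l).HasTemperateGrowth := by
  unfold sym
  refine (tg_jap_rpow_c (-b)).mul ?_
  exact tg_exp.comp ((Function.HasTemperateGrowth.const l).mul tg_jap)

lemma continuous_sym (b l : ℝ) : Continuous (sym b l) := (tg_sym b l).1.continuous

lemma norm_exp_I (r : ℝ) : ‖Complex.exp (Complex.I * (r : ℂ))‖ = 1 := by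
  rw [mul_comm]; exact Complex.norm_exp_ofReal_mul_I r

lemma norm_sym_le (b l : ℝ) (hb : 0 ≤ b) (ξ : ℝ) : ‖sym b l ξ‖ ≤ 1 := by
  unfold sym
  rw [norm_mul, norm_exp_I, mul_one, Complex.norm_real, Real.norm_of_nonneg (Real.rpow_nonneg (jap_pos ξ).le _)]
  exact Real.rpow_le_one_of_one_le_of_nonpos (one_le_jap ξ) (by linarith)

lemma hasDerivAt_jap (s : ℝ) : HasDerivAt jap (s / jap s) s := by
  unfold jap
  have h : HasDerivAt (fun x : ℝ => 1 + x ^ 2) (2 * s) s := by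
    simpa using (hasDerivAt_pow 2 s).const_add 1
  convert h.sqrt (by positivity) using 1
  field_simp

/-- the weight -/
noncomputable def wt (b s : ℝ) : ℝ := jap s ^ (1 - b) / s
noncomputable def wt' (b s : ℝ) : ℝ :=
  (((s / jap s) * (1 - b) * jap s ^ (1 - b - 1)) * s - jap s ^ (1 - b) * 1) / s ^ 2

lemma hasDerivAt_wt (b s : ℝ) (hs : 0 < s) : HasDerivAt (wt b) (wt' b s) s := by
  unfold wt wt'
  exact ((hasDerivAt_jap s).rpow_const (Or.inl (jap_pos s).ne')).div (hasDerivAt_id s) hs.ne'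

lemma wt'_nonpos (b s : ℝ) (hb : 0 ≤ b) (hs : 0 < s) : wt' b s ≤ 0 := by
  unfold wt'
  apply div_nonpos_of_nonpos_of_nonneg _ (by positivity)
  have hj := jap_pos s
  have h2 : jap s ^ 2 = 1 + s ^ 2 := Real.sq_sqrt (by positivity)
  have e : jap s ^ (1 - b) = jap s ^ (1 - b - 1) * jap s := by
    rw [Real.rpow_sub_one hj.ne']; field_simp
  rw [e]
  have hp : 0 < jap s ^ (1 - b - 1) := Real.rpow_pos_of_pos hj _
  have : s / jap s * (1 - b) * jap s ^ (1 - b - 1) * s - jap s ^ (1 - b - 1) * jap s * 1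
     = jap s ^ (1 - b - 1) / jap s * (s ^ 2 * (1 - b) - jap s ^ 2) := by
    field_simp
  rw [this, h2]
  apply mul_nonpos_of_nonneg_of_nonpos (by positivity)
  nlinarith [mul_nonneg hb (sq_nonneg s)]

lemma wt_nonneg (b s : ℝ) (hs : 0 < s) : 0 ≤ wt b s := by
  have hj := jap_pos s
  unfold wt
  positivity

lemma continuousOn_wt' (b : ℝ) (d x : ℝ) (hd : 0 < d) (hx : d ≤ x) :
    ContinuousOn (wt' b) (Set.uIcc d x) := by
  rw [Set.uIcc_of_le hx]
  have hc : Continuous jap := tg_jap.1.continuous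
  unfold wt'
  have h1 : ∀ c : ℝ, Continuous fun s => jap s ^ c := fun c => (tg_jap_rpow c).1.continuous
  have h2 := h1 (1 - b - 1)
  have h3 := h1 (1 - b)
  refine ContinuousOn.div (Continuous.continuousOn ?_) (by fun_prop) ?_
  · have : Continuous fun s => s / jap s := continuous_id.div hc (fun s => (jap_pos s).ne')
    fun_prop
  · intro s hs
    have : 0 < s := lt_of_lt_of_le hd hs.1
    positivity

lemma vdc_aux (b l d x : ℝ) (hb : 0 ≤ b) (hl : l ≠ 0) (hd : 0 < d) (hx : d ≤ x) :
    ‖∫ s in d..x, sym b l s‖ ≤ 2 * wt b d / |l| := by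
  set e : ℝ → ℂ := fun s => Complex.exp (Complex.I * ((l * jap s : ℝ) : ℂ)) with he
  set e' : ℝ → ℂ := fun s => Complex.exp (Complex.I * ((l * jap s : ℝ) : ℂ)) *
    (Complex.I * ((l * (s / jap s) : ℝ) : ℂ)) with he'
  have hpos : ∀ s ∈ Set.uIcc d x, 0 < s := by
    intro s hs
    rw [Set.uIcc_of_le hx] at hs
    exact lt_of_lt_of_le hd hs.1
  have hde : ∀ s, HasDerivAt e (e' s) s := by
    intro s
    exact ((((hasDerivAt_jap s).const_mul l).ofReal_comp).const_mul Complex.I).cexp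
  have hdw : ∀ s ∈ Set.uIcc d x, HasDerivAt (fun s => ((wt b s : ℝ) : ℂ)) ((wt' b s : ℝ) : ℂ) s :=
    fun s hs => (hasDerivAt_wt b s (hpos s hs)).ofReal_comp
  have hcj : Continuous jap := tg_jap.1.continuous
  have hce' : Continuous e' := by
    have : Continuous fun s => s / jap s := continuous_id.div hcj (fun s => (jap_pos s).ne')
    simp only [he']
    fun_prop
  have hcw := continuousOn_wt' b d x hd hx
  have hiw : IntervalIntegrable (wt' b) volume d x := hcw.intervalIntegrable
  have hcwc : ContinuousOn (fun s => ((wt' b s : ℝ) : ℂ)) (Set.uIcc d x) :=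
    Complex.continuous_ofReal.comp_continuousOn hcw
  have key := intervalIntegral.integral_mul_deriv_eq_deriv_mul hdw (fun s _ => hde s)
    hcwc.intervalIntegrable (hce'.intervalIntegrable d x)
  have hsym : ∫ s in d..x, sym b l s = (Complex.I * l)⁻¹ * ∫ s in d..x, ((wt b s : ℝ) : ℂ) * e' s := by
    rw [← intervalIntegral.integral_const_mul]
    apply intervalIntegral.integral_congr
    intro s hs
    have hs0 := (hpos s hs).ne'
    have hj := (jap_pos s).ne'
    have ew : jap s ^ (-b) = wt b s * (s / jap s) := by
      unfold wt
      rw [show (1 - b) = -b + 1 by ring, Real.rpow_add_one hj]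
      field_simp
    simp only [sym, he', ew]
    have : (l : ℂ) ≠ 0 := by exact_mod_cast hl
    push_cast
    field_simp
  have hw1 : ∫ s in d..x, wt' b s = wt b x - wt b d :=
    intervalIntegral.integral_eq_sub_of_hasDerivAt (fun s hs => hasDerivAt_wt b s (hpos s hs)) hiw
  have hn : ‖∫ s in d..x, ((wt' b s : ℝ) : ℂ) * e s‖ ≤ wt b d - wt b x := by
    have : ‖∫ s in d..x, ((wt' b s : ℝ) : ℂ) * e s‖ ≤ ∫ s in d..x, - wt' b s := by
      apply intervalIntegral.norm_integral_le_of_norm_le hx _ hiw.neg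
      refine Filter.Eventually.of_forall fun s hs => ?_
      rw [norm_mul, he, norm_exp_I, mul_one, Complex.norm_real, Real.norm_eq_abs,
        abs_of_nonpos (wt'_nonpos b s hb (hd.trans hs.1))]
      exact le_rfl
    rw [intervalIntegral.integral_neg, hw1] at this
    linarith
  have hx0 := lt_of_lt_of_le hd hx
  have n1 : ‖((wt b x : ℝ) : ℂ) * e x‖ = wt b x := by
    rw [norm_mul, he, norm_exp_I, mul_one, Complex.norm_real, Real.norm_of_nonneg (wt_nonneg b x hx0)]
  have n2 : ‖((wt b d : ℝ) : ℂ) * e d‖ = wt b d := by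
    rw [norm_mul, he, norm_exp_I, mul_one, Complex.norm_real, Real.norm_of_nonneg (wt_nonneg b d hd)]
  have hfin : ‖∫ s in d..x, ((wt b s : ℝ) : ℂ) * e' s‖ ≤ 2 * wt b d := by
    rw [key]
    refine (norm_sub_le _ _).trans ?_
    have := norm_sub_le (((wt b x : ℝ) : ℂ) * e x) (((wt b d : ℝ) : ℂ) * e d)
    rw [n1, n2] at this
    linarith
  rw [hsym, norm_mul, norm_inv, norm_mul, Complex.norm_I, one_mul, Complex.norm_real, Real.norm_eq_abs,
    div_eq_inv_mul]
  gcongr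

lemma wt_le (b d : ℝ) (hb : 0 ≤ b) (hd : 0 < d) (hd1 : d ≤ 1) : wt b d ≤ 2 / d := by
  unfold wt
  gcongr
  calc jap d ^ (1 - b) ≤ jap d ^ (1 : ℝ) :=
        Real.rpow_le_rpow_of_exponent_le (one_le_jap d) (by linarith)
    _ = jap d := Real.rpow_one _
    _ ≤ 2 := by
      unfold jap
      rw [Real.sqrt_le_left (by norm_num)]
      nlinarith

lemma sym_neg (b l s : ℝ) : sym b l (-s) = sym b l s := by
  simp [sym, jap]

lemma vdc_pos (b l x : ℝ) (hb : 0 ≤ b) (hl : 1 ≤ |l|) (hx : 0 ≤ x) :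
    ‖∫ s in (0:ℝ)..x, sym b l s‖ ≤ 5 / Real.sqrt |l| := by
  set d := 1 / Real.sqrt |l| with hd
  have hq : 1 ≤ Real.sqrt |l| := by rwa [Real.one_le_sqrt]
  have hqq : Real.sqrt |l| * Real.sqrt |l| = |l| := Real.mul_self_sqrt (abs_nonneg l)
  have hd0 : 0 < d := by positivity
  have hd1 : d ≤ 1 := by rw [hd, div_le_one (by positivity)]; exact hq
  have hl0 : l ≠ 0 := by rintro rfl; simp at hl; linarith
  have hsmall : ∀ y, 0 ≤ y → ‖∫ s in (0:ℝ)..y, sym b l s‖ ≤ y := by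
    intro y hy
    have := intervalIntegral.norm_integral_le_of_norm_le_const (a := 0) (b := y) (C := 1)
      (f := sym b l) (fun s _ => norm_sym_le b l hb s)
    simpa [abs_of_nonneg hy] using this
  rcases le_total x d with h | h
  · calc _ ≤ x := hsmall x hx
      _ ≤ d := h
      _ ≤ _ := by rw [hd]; gcongr; norm_num
  · rw [← intervalIntegral.integral_add_adjacent_intervals
      ((continuous_sym b l).intervalIntegrable 0 d) ((continuous_sym b l).intervalIntegrable d x)]
    refine (norm_add_le _ _).trans ?_
    have h1 := hsmall d hd0.le
    have h2 := vdc_aux b l d x hb hl0 hd0 h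
    have h3 : 2 * wt b d / |l| ≤ 4 / Real.sqrt |l| := by
      calc 2 * wt b d / |l| ≤ 2 * (2 / d) / |l| := by
            gcongr; exact wt_le b d hb hd0 hd1
        _ = 4 / Real.sqrt |l| := by
          rw [hd, ← hqq]; simp only [Real.sqrt_mul_self (Real.sqrt_nonneg _)]; field_simp; norm_num
    calc _ ≤ d + 4 / Real.sqrt |l| := by linarith
      _ = _ := by rw [hd]; ring

lemma vdc (b l x : ℝ) (hb : 0 ≤ b) (hl : 1 ≤ |l|) :
    ‖∫ s in (0:ℝ)..x, sym b l s‖ ≤ 5 / Real.sqrt |l| := by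
  rcases le_total 0 x with h | h
  · exact vdc_pos b l x hb hl h
  · have := vdc_pos b l (-x) hb hl (by linarith)
    have e : ∫ s in (0:ℝ)..x, sym b l s = - ∫ s in (0:ℝ)..(-x), sym b l s := by
      rw [← intervalIntegral.integral_symm]
      have := intervalIntegral.integral_comp_neg (a := 0) (b := x) (sym b l)
      simp only [sym_neg, neg_zero] at this
      exact this
    rw [e, norm_neg]; exact this

/-- oscillatory estimate -/
lemma osc (b l : ℝ) (hb : 0 ≤ b) (hl : 1 ≤ |l|) (F F' : ℝ → ℂ) (hF : ∀ x, HasDerivAt F (F' x) x)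
    (hi : Integrable F) (hi' : Integrable F') :
    ‖∫ η, sym b l (2 * Real.pi * η) * F η‖ ≤ 5 / Real.sqrt |l| * ∫ η, ‖F' η‖ := by
  set Φ : ℝ → ℂ := fun x => ∫ s in (0:ℝ)..x, sym b l s with hΦ
  have hπ : (2 * Real.pi) ≠ 0 := by positivity
  have hπ1 : 1 ≤ 2 * Real.pi := by linarith [Real.pi_gt_three]
  set u : ℝ → ℂ := fun η => ((2 * Real.pi)⁻¹ : ℝ) • Φ (2 * Real.pi * η) with hu
  have hdΦ : ∀ x, HasDerivAt Φ (sym b l x) x := fun x =>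
    intervalIntegral.integral_hasDerivAt_right ((continuous_sym b l).intervalIntegrable 0 x)
      ((continuous_sym b l).stronglyMeasurableAtFilter _ _) (continuous_sym b l).continuousAt
  have hdu : ∀ η, HasDerivAt u (sym b l (2 * Real.pi * η)) η := by
    intro η
    have h1 : HasDerivAt (fun y : ℝ => 2 * Real.pi * y) (2 * Real.pi) η := by
      simpa using (hasDerivAt_id η).const_mul (2 * Real.pi)
    have := ((hdΦ (2 * Real.pi * η)).scomp η h1).const_smul ((2 * Real.pi)⁻¹ : ℝ)
    rw [smul_smul, inv_mul_cancel₀ hπ, one_smul] at this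
    exact this
  have hub : ∀ η, ‖u η‖ ≤ 5 / Real.sqrt |l| := by
    intro η
    simp only [hu, norm_smul]
    have h1 : ‖((2 * Real.pi)⁻¹ : ℝ)‖ ≤ 1 := by
      rw [Real.norm_of_nonneg (by positivity)]
      exact inv_le_one_of_one_le₀ hπ1
    have h2 := vdc b l (2 * Real.pi * η) hb hl
    calc _ ≤ 1 * (5 / Real.sqrt |l|) := by gcongr
      _ = _ := one_mul _
  have hcu : Continuous u := continuous_iff_continuousAt.2 fun x => (hdu x).continuousAt
  have hcs : Continuous fun η : ℝ => sym b l (2 * Real.pi * η) :=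
    (continuous_sym b l).comp (by fun_prop)
  have key := integral_mul_deriv_eq_deriv_mul_of_integrable (u := u) (v := F)
    (fun x _ => hdu x) (fun x _ => hF x)
    (hi'.bdd_mul hcu.aestronglyMeasurable (Filter.Eventually.of_forall hub))
    (hi.bdd_mul hcs.aestronglyMeasurable (Filter.Eventually.of_forall fun η => norm_sym_le b l hb _))
    (hi.bdd_mul hcu.aestronglyMeasurable (Filter.Eventually.of_forall hub))
  rw [← norm_neg, ← key, ← integral_const_mul]
  apply norm_integral_le_of_norm_le (hi'.norm.const_mul _)
  refine Filter.Eventually.of_forall fun η => ?_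
  rw [norm_mul]
  gcongr
  exact hub η

lemma L2C_nonneg (h : ℝ → ℂ) : 0 ≤ L2C h := Real.sqrt_nonneg _

lemma L2C_sq (h : ℝ → ℂ) : L2C h ^ 2 = ∫ x, ‖h x‖ ^ 2 :=
  Real.sq_sqrt (integral_nonneg fun _ => by positivity)

lemma integrable_sq (f : 𝓢(ℝ, ℂ)) : Integrable fun x => ‖f x‖ ^ 2 :=
  (memLp_two_iff_integrable_sq_norm f.continuous.aestronglyMeasurable).1 (f.memLp 2)

lemma L2C_mono (f g : 𝓢(ℝ, ℂ)) (h : ∀ x, ‖f x‖ ≤ ‖g x‖) : L2C f ≤ L2C g := by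
  unfold L2C
  apply Real.sqrt_le_sqrt
  apply integral_mono (integrable_sq f) (integrable_sq g)
  intro x
  have := h x
  dsimp only
  gcongr

lemma L2C_fourier (f : 𝓢(ℝ, ℂ)) : L2C (𝓕 f : 𝓢(ℝ, ℂ)) = L2C f := by
  unfold L2C
  rw [SchwartzMap.integral_norm_sq_fourier]

lemma integrable_norm_mul (f g : 𝓢(ℝ, ℂ)) : Integrable fun x => ‖f x‖ * ‖g x‖ := by
  have := (f.memLp 2 volume).norm.integrable_mul (g.memLp 2 volume).norm
  exact this

lemma cs (f g : 𝓢(ℝ, ℂ)) : ∫ x, ‖f x‖ * ‖g x‖ ≤ L2C f * L2C g := by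
  have := integral_mul_norm_le_Lp_mul_Lq (μ := volume) (f := f) (g := g)
    Real.HolderConjugate.two_two (by simpa using f.memLp 2) (by simpa using g.memLp 2)
  simpa [L2C, Real.sqrt_eq_rpow] using this

/-- Multiplication by `-2πix`. -/
noncomputable def xm (k : 𝓢(ℝ, ℂ)) : 𝓢(ℝ, ℂ) :=
  SchwartzMap.smulLeftCLM ℂ (fun x : ℝ => (-2 * Real.pi * Complex.I * x : ℂ)) k

lemma xm_apply (k : 𝓢(ℝ, ℂ)) (x : ℝ) : xm k x = (-2 * Real.pi * Complex.I * x : ℂ) * k x := by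
  unfold xm
  rw [SchwartzMap.smulLeftCLM_apply_apply, smul_eq_mul]
  exact (Function.HasTemperateGrowth.const _).mul Function.Complex.hasTemperateGrowth_ofReal

lemma hasDerivAt_F (k : 𝓢(ℝ, ℂ)) (w : ℝ) : HasDerivAt (𝓕 k : 𝓢(ℝ, ℂ)) ((𝓕 (xm k) : 𝓢(ℝ, ℂ)) w) w := by
  have hx : Integrable (fun x : ℝ => x • k x) := by
    have h2 : Integrable (fun x => ((-2 * Real.pi * Complex.I : ℂ))⁻¹ * xm k x) :=
      (xm k).integrable.const_mul _
    refine h2.congr (Filter.Eventually.of_forall fun x => ?_)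
    simp only [xm_apply]
    have : (Real.pi : ℂ) ≠ 0 := by exact_mod_cast Real.pi_ne_zero
    have := Complex.I_ne_zero
    rw [Complex.real_smul]
    field_simp
  have := Real.hasDerivAt_fourier k.integrable hx w
  rw [SchwartzMap.fourier_coe, SchwartzMap.fourier_coe]
  have e : (xm k : ℝ → ℂ) = fun x : ℝ => (-2 * Real.pi * Complex.I * x : ℂ) • k x := by
    funext x
    rw [xm_apply, smul_eq_mul]
  rw [e]
  exact this

/-- The symbol in Mathlib's frequency variable. -/
noncomputable def sym2 (b l : ℝ) (η : ℝ) : ℂ := sym b l (2 * Real.pi * η)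

lemma tg_sym2 (b l : ℝ) : (sym2 b l).HasTemperateGrowth := by
  exact (tg_sym b l).comp ((Function.HasTemperateGrowth.const (2 * Real.pi)).mul
    Function.HasTemperateGrowth.id')

noncomputable def prop (b l : ℝ) (h : 𝓢(ℝ, ℂ)) : 𝓢(ℝ, ℂ) :=
  𝓕⁻ (SchwartzMap.smulLeftCLM ℂ (sym2 b l) (𝓕 h))

lemma pairing (b l : ℝ) (h k : 𝓢(ℝ, ℂ)) :
    ∫ x, inner ℂ (k x) (prop b l h x)
      = ∫ η, sym b l (2 * Real.pi * η) * inner ℂ (𝓕 k η) (𝓕 h η) := by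
  have := SchwartzMap.integral_sesq_fourier_eq k (SchwartzMap.smulLeftCLM ℂ (sym2 b l) (𝓕 h))
    (innerSL ℂ)
  simp only [innerSL_apply_apply] at this
  unfold prop
  rw [← this]
  congr 1
  funext η
  rw [SchwartzMap.smulLeftCLM_apply_apply (tg_sym2 b l), inner_smul_right]
  rfl

lemma integrable_inner (f g : 𝓢(ℝ, ℂ)) : Integrable fun x => inner ℂ (f x) (g x) := by
  refine (integrable_norm_mul f g).mono' ?_ ?_
  · exact (Continuous.inner (𝕜 := ℂ) f.continuous g.continuous).aestronglyMeasurable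
  · exact Filter.Eventually.of_forall fun x => norm_inner_le_norm _ _

lemma pair_triv (b l : ℝ) (hb : 0 ≤ b) (h k : 𝓢(ℝ, ℂ)) :
    ‖∫ x, inner ℂ (k x) (prop b l h x)‖ ≤ L2C k * L2C h := by
  rw [pairing, ← L2C_fourier k, ← L2C_fourier h]
  refine le_trans ?_ (cs (𝓕 k) (𝓕 h))
  apply norm_integral_le_of_norm_le (integrable_norm_mul _ _)
  refine Filter.Eventually.of_forall fun η => ?_
  rw [norm_mul]
  calc _ ≤ 1 * (‖𝓕 k η‖ * ‖𝓕 h η‖) := by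
        gcongr
        · exact norm_sym_le b l hb _
        · exact norm_inner_le_norm _ _
    _ = _ := one_mul _

lemma pair_osc (b l : ℝ) (hb : 0 ≤ b) (hl : 1 ≤ |l|) (h k : 𝓢(ℝ, ℂ)) :
    ‖∫ x, inner ℂ (k x) (prop b l h x)‖ ≤
      5 / Real.sqrt |l| * (L2C k * L2C (xm h) + L2C (xm k) * L2C h) := by
  rw [pairing]
  have hi' := (integrable_inner (𝓕 k) (𝓕 (xm h))).add (integrable_inner (𝓕 (xm k)) (𝓕 h))
  refine (osc b l hb hl _ _ (fun η => (hasDerivAt_F k η).inner ℂ (hasDerivAt_F h η))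
    (integrable_inner _ _) hi').trans ?_
  gcongr
  rw [← L2C_fourier k, ← L2C_fourier h, ← L2C_fourier (xm k), ← L2C_fourier (xm h)]
  refine le_trans ?_ (add_le_add (cs (𝓕 k) (𝓕 (xm h))) (cs (𝓕 (xm k)) (𝓕 h)))
  rw [← integral_add (integrable_norm_mul _ _) (integrable_norm_mul _ _)]
  refine integral_mono hi'.norm ((integrable_norm_mul _ _).add (integrable_norm_mul _ _)) ?_
  intro η
  exact (norm_add_le _ _).trans (add_le_add (norm_inner_le_norm _ _) (norm_inner_le_norm _ _))

lemma FT_eq (h : ℝ → ℂ) (ξ : ℝ) :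
    FT h (2 * Real.pi * ξ) = (Real.sqrt (2 * Real.pi) : ℂ)⁻¹ * 𝓕 h ξ := by
  unfold FT
  rw [Real.fourier_real_eq_integral_exp_smul]
  congr 2
  funext x
  rw [smul_eq_mul]
  congr 2
  push_cast
  ring

lemma Mop_eq (b l : ℝ) (h : 𝓢(ℝ, ℂ)) (x : ℝ) : Mop (sym b l) h x = prop b l h x := by
  unfold Mop IFT prop
  rw [SchwartzMap.fourierInv_coe, Real.fourierInv_eq']
  have hπ : 0 < 2 * Real.pi := by positivity
  have := Measure.integral_comp_mul_left (fun ξ : ℝ => Complex.exp (Complex.I * x * ξ) *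
    (sym b l ξ * FT h ξ)) (2 * Real.pi)
  have e : ∫ ξ : ℝ, Complex.exp (Complex.I * x * ξ) * (sym b l ξ * FT h ξ)
      = ((2 * Real.pi : ℝ) : ℂ) * ∫ η : ℝ, Complex.exp (Complex.I * x * ((2 * Real.pi * η : ℝ) : ℂ)) *
          (sym b l (2 * Real.pi * η) * FT h (2 * Real.pi * η)) := by
    rw [this, abs_of_pos (by positivity), Complex.real_smul, ← mul_assoc, ← Complex.ofReal_mul,
      mul_inv_cancel₀ hπ.ne']
    simp
  rw [e, ← mul_assoc, ← integral_const_mul]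
  congr 1
  funext η
  rw [SchwartzMap.smulLeftCLM_apply_apply (tg_sym2 b l), FT_eq, smul_eq_mul, smul_eq_mul,
    SchwartzMap.fourier_coe]
  have hs : (Real.sqrt (2 * Real.pi) : ℂ) ≠ 0 := by
    exact_mod_cast (Real.sqrt_pos.2 hπ).ne'
  have hss : ((2 * Real.pi : ℝ) : ℂ) = (Real.sqrt (2 * Real.pi) : ℂ) * (Real.sqrt (2 * Real.pi) : ℂ) := by
    rw [← Complex.ofReal_mul, Real.mul_self_sqrt hπ.le]
  have hexp : Complex.I * x * ((2 * Real.pi * η : ℝ) : ℂ)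
      = ((2 * Real.pi * inner ℝ η x : ℝ) : ℂ) * Complex.I := by
    simp
    ring
  rw [hexp, hss]
  unfold sym2
  field_simp

/-- Multiplication by `⟨x⟩^{-a}`. -/
noncomputable def wm (a : ℝ) (f : 𝓢(ℝ, ℂ)) : 𝓢(ℝ, ℂ) :=
  SchwartzMap.smulLeftCLM ℂ (fun x : ℝ => ((jap x ^ (-a) : ℝ) : ℂ)) f

lemma wm_apply (a : ℝ) (f : 𝓢(ℝ, ℂ)) (x : ℝ) :
    wm a f x = ((jap x ^ (-a) : ℝ) : ℂ) * f x := by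
  unfold wm
  rw [SchwartzMap.smulLeftCLM_apply_apply (tg_jap_rpow_c _), smul_eq_mul]

lemma norm_w (a x : ℝ) : ‖((jap x ^ (-a) : ℝ) : ℂ)‖ = jap x ^ (-a) := by
  rw [Complex.norm_real, Real.norm_of_nonneg (Real.rpow_nonneg (jap_pos x).le _)]

lemma L2C_wm (a : ℝ) (ha : 1 ≤ a) (f : 𝓢(ℝ, ℂ)) : L2C (wm a f) ≤ L2C f := by
  apply L2C_mono
  intro x
  rw [wm_apply, norm_mul, norm_w]
  exact mul_le_of_le_one_left (norm_nonneg _)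
    (Real.rpow_le_one_of_one_le_of_nonpos (one_le_jap x) (by linarith))

lemma L2C_xm_wm (a : ℝ) (ha : 1 ≤ a) (f : 𝓢(ℝ, ℂ)) :
    L2C (xm (wm a f)) ≤ 2 * Real.pi * L2C f := by
  have h1 : L2C (((2 * Real.pi : ℝ) : ℂ) • f : 𝓢(ℝ, ℂ)) = 2 * Real.pi * L2C f := by
    unfold L2C
    have : ∀ x, ‖((((2 * Real.pi : ℝ) : ℂ) • f : 𝓢(ℝ, ℂ)) x)‖ ^ 2 = (2 * Real.pi) ^ 2 * ‖f x‖ ^ 2 := by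
      intro x
      rw [smul_apply, norm_smul, Complex.norm_real,
        Real.norm_of_nonneg (by positivity), mul_pow]
    simp_rw [this]
    rw [integral_const_mul, Real.sqrt_mul (by positivity), Real.sqrt_sq (by positivity)]
  rw [← h1]
  apply L2C_mono
  intro x
  rw [xm_apply, wm_apply, smul_apply, norm_smul, norm_mul,
    norm_mul ((jap x ^ (-a) : ℝ) : ℂ), norm_w,
    Complex.norm_real, Real.norm_of_nonneg (by positivity : 0 ≤ 2 * Real.pi)]
  have e : ‖(-2 * Real.pi * Complex.I * x : ℂ)‖ = 2 * Real.pi * |x| := by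
    simp [abs_of_pos Real.pi_pos]
  rw [e]
  have hx : |x| * jap x ^ (-a) ≤ 1 := by
    have h2 : |x| ≤ jap x := by
      unfold jap
      apply Real.abs_le_sqrt
      linarith
    have h3 : jap x ^ (-a) ≤ jap x ^ (-1 : ℝ) :=
      Real.rpow_le_rpow_of_exponent_le (one_le_jap x) (by linarith)
    rw [Real.rpow_neg_one] at h3
    calc |x| * jap x ^ (-a) ≤ jap x * (jap x)⁻¹ := by
          gcongr
          · exact Real.rpow_nonneg (jap_pos x).le _
          · exact (jap_pos x).le
      _ = 1 := mul_inv_cancel₀ (jap_pos x).ne'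
  calc 2 * Real.pi * |x| * (jap x ^ (-a) * ‖f x‖)
      = 2 * Real.pi * (|x| * jap x ^ (-a)) * ‖f x‖ := by ring
    _ ≤ 2 * Real.pi * 1 * ‖f x‖ := by gcongr
    _ = _ := by ring

lemma dual (a b l : ℝ) (f : 𝓢(ℝ, ℂ)) :
    L2C (wm a (prop b l (wm a f))) ^ 2
      = ‖∫ x, inner ℂ (wm a (wm a (prop b l (wm a f))) x) (prop b l (wm a f) x)‖ := by
  rw [L2C_sq]
  set u := prop b l (wm a f)
  have : ∀ x, inner ℂ (wm a (wm a u) x) (u x) = ((‖wm a u x‖ ^ 2 : ℝ) : ℂ) := by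
    intro x
    rw [wm_apply a (wm a u), ← smul_eq_mul, inner_smul_left, Complex.conj_ofReal, ← inner_smul_right,
      smul_eq_mul, ← wm_apply, inner_self_eq_norm_sq_to_K]
    simp
  simp_rw [this]
  rw [integral_complex_ofReal, Complex.norm_real,
    Real.norm_of_nonneg (integral_nonneg fun _ => by positivity)]

lemma cancel {X B Y : ℝ} (hX : 0 ≤ X) (hY : 0 ≤ B * Y) (h : X ^ 2 ≤ B * (X * Y)) : X ≤ B * Y := by
  rcases hX.eq_or_lt with h0 | h0
  · rw [← h0]; exact hY
  · nlinarith

lemma main_triv (a b l : ℝ) (ha : 1 ≤ a) (hb : 0 ≤ b) (f : 𝓢(ℝ, ℂ)) :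
    L2C (wm a (prop b l (wm a f))) ≤ 1 * L2C f := by
  apply cancel (L2C_nonneg _) (by simpa using L2C_nonneg f)
  rw [dual, one_mul]
  refine (pair_triv b l hb _ _).trans ?_
  exact mul_le_mul (L2C_wm a ha _) (L2C_wm a ha _) (L2C_nonneg _) (L2C_nonneg _)

lemma main_osc (a b l : ℝ) (ha : 1 ≤ a) (hb : 0 ≤ b) (hl : 1 ≤ |l|) (f : 𝓢(ℝ, ℂ)) :
    L2C (wm a (prop b l (wm a f))) ≤ (5 / Real.sqrt |l| * (4 * Real.pi)) * L2C f := by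
  have hY := L2C_nonneg f
  apply cancel (L2C_nonneg _) (by positivity)
  rw [dual]
  refine (pair_osc b l hb hl _ _).trans ?_
  set G := wm a (prop b l (wm a f))
  have hG := L2C_nonneg G
  calc _ ≤ 5 / Real.sqrt |l| * (L2C G * (2 * Real.pi * L2C f) + 2 * Real.pi * L2C G * L2C f) := by
        gcongr
        · exact L2C_nonneg _
        · exact L2C_wm a ha _
        · exact L2C_xm_wm a ha _
        · exact L2C_nonneg _
        · exact L2C_xm_wm a ha _
        · exact L2C_wm a ha _
    _ = _ := by ring

end KG

/-- Pointwise-in-time local decay for the Klein–Gordon propagator: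
`‖⟨·⟩^{-a} ⟨∇⟩^{-b} e^{±it⟨∇⟩} (⟨·⟩^{-a} f)‖_{L²} ≤ C ⟨t⟩^{-1/2} ‖f‖_{L²}`
for all `a ≥ 1`, `b ≥ 0`. -/
theorem local_decay_klein_gordon (a b : ℝ) (ha : 1 ≤ a) (hb : 0 ≤ b) :
    ∃ C : ℝ, 1 ≤ C ∧
      ∀ σ : ℝ, (σ = 1 ∨ σ = -1) → ∀ (t : ℝ) (f : SchwartzMap ℝ ℂ),
        L2C (fun x => ((jap x ^ (-a) : ℝ) : ℂ) *
            Mop (fun ξ => ((jap ξ ^ (-b) : ℝ) : ℂ) *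
                Complex.exp (Complex.I * (σ : ℂ) * (t : ℂ) * (jap ξ : ℂ)))
              (fun z => ((jap z ^ (-a) : ℝ) : ℂ) * f z) x)
          ≤ C * jap t ^ (-(1 : ℝ) / 2) * L2C (fun x => f x) := by
  refine ⟨200, by norm_num, ?_⟩
  intro σ hσ t f
  have hσ1 : |σ| = 1 := by rcases hσ with rfl | rfl <;> simp
  have hl : |σ * t| = |t| := by rw [abs_mul, hσ1, one_mul]
  have e : (fun x => ((jap x ^ (-a) : ℝ) : ℂ) *
            Mop (fun ξ => ((jap ξ ^ (-b) : ℝ) : ℂ) *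
                Complex.exp (Complex.I * (σ : ℂ) * (t : ℂ) * (jap ξ : ℂ)))
              (fun z => ((jap z ^ (-a) : ℝ) : ℂ) * f z) x)
      = KG.wm a (KG.prop b (σ * t) (KG.wm a f)) := by
    funext x
    rw [KG.wm_apply, ← KG.Mop_eq]
    congr 2
    · funext ξ
      unfold KG.sym
      congr 2
      push_cast
      ring
    · funext z
      rw [KG.wm_apply]
  rw [e]
  have hj := KG.jap_pos t
  have hexp : jap t ^ (-(1 : ℝ) / 2) = (Real.sqrt (jap t))⁻¹ := by
    rw [Real.sqrt_eq_rpow, ← Real.rpow_neg hj.le]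
    norm_num
  rw [hexp]
  have hs : 0 < Real.sqrt (jap t) := Real.sqrt_pos.2 hj
  have hf := KG.L2C_nonneg (fun x => f x)
  rcases le_total 1 |t| with h | h
  · refine (KG.main_osc a b (σ * t) ha hb (by rwa [hl]) f).trans ?_
    rw [hl]
    apply mul_le_mul_of_nonneg_right _ hf
    have ht : 0 < Real.sqrt |t| := Real.sqrt_pos.2 (by linarith)
    have h1 : jap t ≤ 2 ^ 2 * |t| := by
      unfold jap
      rw [Real.sqrt_le_left (by positivity)]
      nlinarith [sq_abs t]
    have h2 : Real.sqrt (jap t) ≤ 2 * Real.sqrt |t| := by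
      calc Real.sqrt (jap t) ≤ Real.sqrt (2 ^ 2 * |t|) := Real.sqrt_le_sqrt h1
        _ = _ := by rw [Real.sqrt_mul (by norm_num), Real.sqrt_sq (by norm_num)]
    rw [← div_eq_mul_inv, div_mul_eq_mul_div, div_le_div_iff₀ ht hs]
    nlinarith [Real.pi_lt_d2, Real.pi_pos]
  · refine (KG.main_triv a b (σ * t) ha hb f).trans ?_
    apply mul_le_mul_of_nonneg_right _ hf
    have h1 : jap t ≤ 2 ^ 2 := by
      unfold jap
      rw [Real.sqrt_le_left (by positivity)]
      nlinarith [sq_abs t, abs_nonneg t]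
    have h2 : Real.sqrt (jap t) ≤ 2 := by
      rw [Real.sqrt_le_left (by norm_num)]
      exact h1
    rw [← div_eq_mul_inv, le_div_iff₀ hs]
    linarith
end

section
/- There exists an absolute constant C ≥ 1 such that for all t ∈ ℝ and all Schwartz functions f : ℝ → ℂ: ‖ ⟨·⟩^{-2} (∂_x/⟨∇⟩) e^{±it⟨∇⟩} ( ⟨·⟩^{-2} f ) ‖_{L²(ℝ)} ≤ C ⟨t⟩^{-3/2} ‖f‖_{L²(ℝ)}. -/
open MeasureTheory

open scoped SchwartzMap FourierTransform

theorem kg_FT_eq (h : ℝ → ℂ) (ξ : ℝ) :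
    FT h ξ = (Real.sqrt (2 * Real.pi) : ℂ)⁻¹ * 𝓕 h ((2 * Real.pi)⁻¹ * ξ) := by
  unfold FT
  rw [Real.fourier_real_eq_integral_exp_smul]
  congr 1
  apply integral_congr_ae
  refine Filter.Eventually.of_forall fun x => ?_
  simp only [smul_eq_mul]
  congr 2
  have : (Real.pi : ℂ) ≠ 0 := by exact_mod_cast Real.pi_ne_zero
  push_cast
  field_simp

theorem kg_IFT_eq (h : ℝ → ℂ) (x : ℝ) : IFT h x = FT h (-x) := by
  unfold IFT FT
  congr 1
  apply integral_congr_ae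
  refine Filter.Eventually.of_forall fun y => ?_
  simp only
  congr 2
  push_cast
  ring

noncomputable def kgScale : ℝ ≃L[ℝ] ℝ :=
  ContinuousLinearEquiv.unitsEquivAut ℝ (Units.mk0 ((2 * Real.pi)⁻¹) (by positivity))

theorem kgScale_apply (x : ℝ) : kgScale x = (2 * Real.pi)⁻¹ * x := by
  simp [kgScale, mul_comm]

noncomputable def kgFT (g : 𝓢(ℝ, ℂ)) : 𝓢(ℝ, ℂ) :=
  (Real.sqrt (2 * Real.pi) : ℂ)⁻¹ • SchwartzMap.compCLMOfContinuousLinearEquiv ℂ kgScale (𝓕 g)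

theorem kgFT_apply (g : 𝓢(ℝ, ℂ)) (ξ : ℝ) : kgFT g ξ = FT g ξ := by
  rw [kg_FT_eq]
  simp only [kgFT, smul_apply, SchwartzMap.compCLMOfContinuousLinearEquiv_apply,
    Function.comp, kgScale_apply, smul_eq_mul, SchwartzMap.fourier_coe]

theorem kg_plancherel (g : 𝓢(ℝ, ℂ)) : ∫ ξ, ‖FT g ξ‖ ^ 2 = ∫ x, ‖g x‖ ^ 2 := by
  have hpi := Real.pi_pos
  rw [← SchwartzMap.integral_norm_sq_fourier g]
  simp only [kg_FT_eq, norm_mul, mul_pow]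
  rw [integral_const_mul, Measure.integral_comp_mul_left (fun y => ‖𝓕 (g : ℝ → ℂ) y‖ ^ 2)]
  simp only [SchwartzMap.fourier_coe, smul_eq_mul]
  rw [← mul_assoc]
  have : ‖((Real.sqrt (2 * Real.pi) : ℂ))⁻¹‖ ^ 2 * |((2 * Real.pi)⁻¹)⁻¹| = 1 := by
    rw [norm_inv, Complex.norm_real, Real.norm_eq_abs, inv_pow, sq_abs, Real.sq_sqrt (by positivity),
      inv_inv, abs_of_pos (by positivity)]
    field_simp
  rw [this, one_mul]

theorem kg_plancherel_inv (g : 𝓢(ℝ, ℂ)) : ∫ ξ, ‖IFT g ξ‖ ^ 2 = ∫ x, ‖g x‖ ^ 2 := by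
  simp only [kg_IFT_eq]
  rw [integral_neg_eq_self (fun x => ‖FT g x‖ ^ 2), kg_plancherel]

theorem kg_sq_integrable (g : 𝓢(ℝ, ℂ)) : Integrable (fun x => ‖g x‖ ^ 2) := by
  have := (SchwartzMap.memLp g 2 volume)
  exact this.integrable_norm_pow (by norm_num)

theorem kg_IFT_sq_integrable (g : 𝓢(ℝ, ℂ)) : Integrable (fun x => ‖IFT g x‖ ^ 2) := by
  have := (kg_sq_integrable (kgFT g)).comp_neg
  simpa only [kgFT_apply, ← kg_IFT_eq] using this

/-- multiplication of a Schwartz function by a temperate growth function -/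
noncomputable def kgMul (u : ℝ → ℂ) (S : 𝓢(ℝ, ℂ)) : 𝓢(ℝ, ℂ) := SchwartzMap.smulLeftCLM ℂ u S

theorem kgMul_coe {u : ℝ → ℂ} (hu : u.HasTemperateGrowth) (S : 𝓢(ℝ, ℂ)) :
    (kgMul u S : ℝ → ℂ) = fun x => u x * S x := by
  ext x
  simp [kgMul, SchwartzMap.smulLeftCLM_apply_apply hu]

theorem kg_sq_le {u : ℝ → ℂ} (S : 𝓢(ℝ, ℂ)) (M : ℝ)
    (hM : ∀ x, ‖u x‖ ≤ M) : ∫ x, ‖u x * S x‖ ^ 2 ≤ M ^ 2 * ∫ x, ‖S x‖ ^ 2 := by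
  rw [← integral_const_mul]
  apply integral_mono_of_nonneg
  · exact Filter.Eventually.of_forall fun x => by positivity
  · exact (kg_sq_integrable S).const_mul _
  · refine Filter.Eventually.of_forall fun x => ?_
    simp only [norm_mul, mul_pow]
    have := hM x
    gcongr

theorem kg_IFT_mul_bound {u : ℝ → ℂ} (hu : u.HasTemperateGrowth) (S : 𝓢(ℝ, ℂ)) (M : ℝ)
    (hM : ∀ x, ‖u x‖ ≤ M) :
    Integrable (fun x => ‖IFT (fun ξ => u ξ * S ξ) x‖ ^ 2) ∧
    ∫ x, ‖IFT (fun ξ => u ξ * S ξ) x‖ ^ 2 ≤ M ^ 2 * ∫ x, ‖S x‖ ^ 2 := by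
  have h1 := kg_IFT_sq_integrable (kgMul u S)
  have h2 := kg_plancherel_inv (kgMul u S)
  rw [kgMul_coe hu] at h1 h2
  exact ⟨h1, h2 ▸ kg_sq_le S M hM⟩

theorem kg_exp_deriv (x ξ : ℝ) : HasDerivAt (fun ξ : ℝ => Complex.exp (Complex.I * x * ξ))
    (Complex.I * x * Complex.exp (Complex.I * x * ξ)) ξ := by
  have h : HasDerivAt (fun ξ : ℝ => Complex.I * x * (ξ : ℂ)) (Complex.I * x * 1) ξ :=
    (Complex.ofRealCLM.hasDerivAt (x := ξ)).const_mul _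
  convert h.cexp using 1
  ring

theorem kg_exp_integrable (x : ℝ) {S : ℝ → ℂ} (hS : Integrable S) :
    Integrable (fun ξ : ℝ => Complex.exp (Complex.I * x * ξ) * S ξ) := by
  refine hS.bdd_mul (c := 1) (by fun_prop) ?_
  refine Filter.Eventually.of_forall fun ξ => ?_
  rw [show Complex.I * x * ξ = ((x * ξ : ℝ) : ℂ) * Complex.I by push_cast; ring,
    Complex.norm_exp_ofReal_mul_I]

/-- integration by parts -/
theorem kg_ibp {u v : ℝ → ℂ} (hu : u.HasTemperateGrowth) (hv : v.HasTemperateGrowth)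
    (huv : ∀ ξ, HasDerivAt u (v ξ) ξ) (S S' : 𝓢(ℝ, ℂ)) (hS : ∀ ξ, HasDerivAt S (S' ξ) ξ) (x : ℝ) :
    IFT (fun ξ => v ξ * S ξ) x = - (Complex.I * x) * IFT (fun ξ => u ξ * S ξ) x
      - IFT (fun ξ => u ξ * S' ξ) x := by
  have i1 := kg_exp_integrable x (kgMul v S).integrable
  have i2 := kg_exp_integrable x (kgMul u S).integrable
  have i3 := kg_exp_integrable x (kgMul u S').integrable
  rw [kgMul_coe hv] at i1
  rw [kgMul_coe hu] at i2 i3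
  beta_reduce at i1 i2 i3
  have key : ∫ ξ : ℝ, (Complex.I * x * (Complex.exp (Complex.I * x * ξ) * (u ξ * S ξ)) +
      (Complex.exp (Complex.I * x * ξ) * (v ξ * S ξ) +
        Complex.exp (Complex.I * x * ξ) * (u ξ * S' ξ))) = 0 := by
    refine integral_eq_zero_of_hasDerivAt_of_integrable
      (f := fun ξ : ℝ => Complex.exp (Complex.I * x * ξ) * (u ξ * S ξ)) (fun ξ => ?_)
      ((i2.const_mul _).add (i1.add i3)) i2
    have := (kg_exp_deriv x ξ).mul ((huv ξ).mul (hS ξ))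
    refine this.congr_deriv ?_
    rw [Pi.mul_apply]
    ring
  rw [integral_add (i2.const_mul _) (by exact i1.add i3), integral_add i1 i3, integral_const_mul] at key
  unfold IFT
  linear_combination (Real.sqrt (2 * Real.pi) : ℂ)⁻¹ * key

theorem kg_FT_deriv (g : 𝓢(ℝ, ℂ)) (ξ : ℝ) :
    HasDerivAt (kgFT g) (kgFT (kgMul (fun z => -(Complex.I * z)) g) ξ) ξ := by
  have ht : (fun z : ℝ => -(Complex.I * z)).HasTemperateGrowth := by fun_prop
  have hi := (kgMul (fun z => -(Complex.I * z)) g).integrable (μ := volume)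
  rw [kgMul_coe ht] at hi
  have hi2 : Integrable (fun x : ℝ => x • g x) := by
    refine (hi.const_mul Complex.I).congr (Filter.Eventually.of_forall fun x => ?_)
    simp only [Complex.real_smul]
    linear_combination -(x * g x) * Complex.I_sq
  have hd := Real.hasDerivAt_fourier (f := g) g.integrable hi2 ((2 * Real.pi)⁻¹ * ξ)
  have hl : HasDerivAt (fun ξ : ℝ => (2 * Real.pi)⁻¹ * ξ) ((2 * Real.pi)⁻¹ * 1) ξ :=
    (hasDerivAt_id ξ).const_mul _
  have h := (hd.scomp ξ hl).const_mul ((Real.sqrt (2 * Real.pi) : ℂ)⁻¹)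
  have e : (kgFT g : ℝ → ℂ) = fun ξ => (Real.sqrt (2 * Real.pi) : ℂ)⁻¹ *
      (𝓕 (g : ℝ → ℂ) ∘ fun ξ : ℝ => (2 * Real.pi)⁻¹ * ξ) ξ := by
    ext ξ; rw [kgFT_apply, kg_FT_eq]; rfl
  rw [e]
  refine HasDerivAt.congr_deriv h (Eq.symm ?_)
  rw [kgFT_apply, kgMul_coe ht, kg_FT_eq]
  congr 1
  rw [Real.fourier_real_eq_integral_exp_smul, Real.fourier_real_eq_integral_exp_smul,
    ← integral_smul]
  congr 1
  ext z
  have : (Real.pi : ℂ) ≠ 0 := by exact_mod_cast Real.pi_ne_zero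
  simp only [smul_eq_mul, Complex.real_smul]
  push_cast
  field_simp

theorem jap_pos (x : ℝ) : 0 < jap x := by unfold jap; positivity

theorem jap_sq (x : ℝ) : jap x ^ 2 = 1 + x ^ 2 := Real.sq_sqrt (by positivity)

theorem jap_deriv (x : ℝ) : HasDerivAt jap (x / jap x) x := by
  have h : HasDerivAt (fun x : ℝ => 1 + x ^ 2) (2 * x) x := by
    simpa using (hasDerivAt_pow 2 x).const_add 1
  have := h.sqrt (by positivity)
  refine HasDerivAt.congr_deriv (f := jap) this ?_
  rw [mul_div_mul_left _ _ two_ne_zero]; rfl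

theorem jap_temp_rpow (r : ℝ) : (fun x : ℝ => jap x ^ r).HasTemperateGrowth := by
  have := Function.hasTemperateGrowth_one_add_norm_sq_rpow ℝ (r / 2)
  refine cast (congrArg _ (funext fun x => ?_)) this
  rw [jap, Real.sqrt_eq_rpow, ← Real.rpow_mul (by positivity), Real.norm_eq_abs, sq_abs]
  congr 1; ring

theorem jap_temp : jap.HasTemperateGrowth := by
  simpa using jap_temp_rpow 1

theorem exp_temp (a : ℝ) : (fun x : ℝ => Complex.exp (Complex.I * a * x)).HasTemperateGrowth := by
  refine ⟨(contDiff_const.mul Complex.ofRealCLM.contDiff).cexp, fun n => ⟨0, |a| ^ n, fun x => ?_⟩⟩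
  rw [norm_iteratedFDeriv_eq_norm_iteratedDeriv]
  have : ∀ n : ℕ, iteratedDeriv n (fun x : ℝ => Complex.exp (Complex.I * a * x)) =
      fun x : ℝ => (Complex.I * a) ^ n * Complex.exp (Complex.I * a * x) := by
    intro n
    induction n with
    | zero => simp
    | succ n ih =>
      rw [iteratedDeriv_succ, ih]
      ext x
      rw [((kg_exp_deriv a x).const_mul _).deriv]
      ring
  rw [this]
  beta_reduce
  rw [show Complex.I * a * x = ((a * x : ℝ) : ℂ) * Complex.I by push_cast; ring,
    norm_mul, Complex.norm_exp_ofReal_mul_I]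
  simp

/-- The phase. -/
noncomputable def kgE (a : ℝ) (ξ : ℝ) : ℂ := Complex.exp (Complex.I * a * jap ξ)

theorem kgE_temp (a : ℝ) : (kgE a).HasTemperateGrowth := (exp_temp a).comp jap_temp

theorem kgE_norm (a ξ : ℝ) : ‖kgE a ξ‖ = 1 := by
  rw [kgE, show Complex.I * a * jap ξ = ((a * jap ξ : ℝ) : ℂ) * Complex.I by push_cast; ring,
    Complex.norm_exp_ofReal_mul_I]

theorem kgE_cont (a : ℝ) : Continuous (kgE a) := by
  unfold kgE jap; fun_prop

theorem kgE_deriv (a ξ : ℝ) :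
    HasDerivAt (kgE a) (a * (Complex.I * ξ / jap ξ * kgE a ξ)) ξ := by
  have := (kg_exp_deriv a (jap ξ)).scomp ξ (jap_deriv ξ)
  refine HasDerivAt.congr_deriv (f := kgE a) this ?_
  rw [kgE, Complex.real_smul]
  push_cast
  ring

theorem kgm_temp (a : ℝ) : (fun ξ : ℝ => Complex.I * ξ / jap ξ * kgE a ξ).HasTemperateGrowth := by
  have h1 := jap_temp_rpow (-1)
  have h2 := kgE_temp a
  have h3 : (fun ξ : ℝ => Complex.I * ξ * (((jap ξ ^ (-1 : ℝ) : ℝ) : ℂ)) * kgE a ξ).HasTemperateGrowth := by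
    have h1' : (fun ξ : ℝ => (((jap ξ ^ (-1 : ℝ) : ℝ) : ℂ))).HasTemperateGrowth :=
      Function.HasTemperateGrowth.comp Function.Complex.hasTemperateGrowth_ofReal h1
    have h0 : (fun z : ℝ => (Complex.I * z)).HasTemperateGrowth := by fun_prop
    exact (h0.mul h1').mul h2
  convert h3 using 2 with ξ
  rw [Real.rpow_neg_one]
  push_cast
  ring

theorem kgm_norm (a ξ : ℝ) : ‖Complex.I * ξ / jap ξ * kgE a ξ‖ ≤ 1 := by
  rw [norm_mul, kgE_norm, mul_one, norm_div, norm_mul, Complex.norm_I, one_mul, Complex.norm_real,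
    Complex.norm_real, Real.norm_eq_abs, Real.norm_of_nonneg (jap_pos ξ).le, div_le_one (jap_pos ξ)]
  apply Real.abs_le_sqrt; linarith

noncomputable def kgW (a : ℝ) (ξ : ℝ) : ℂ := ∫ s in (0:ℝ)..ξ, kgE a s

theorem kgW_deriv (a ξ : ℝ) : HasDerivAt (kgW a) (kgE a ξ) ξ :=
  intervalIntegral.integral_hasDerivAt_right ((kgE_cont a).intervalIntegrable _ _)
    ((kgE_cont a).stronglyMeasurableAtFilter _ _) (kgE_cont a).continuousAt

theorem kgW_temp (a : ℝ) : (kgW a).HasTemperateGrowth := by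
  refine Function.HasTemperateGrowth.of_fderiv (k := 1) (C := 1) ?_
    (fun ξ => (kgW_deriv a ξ).differentiableAt) ?_
  · have : fderiv ℝ (kgW a) = fun ξ => ContinuousLinearMap.toSpanSingletonCLE (𝕜 := ℝ) (kgE a ξ) := by
      ext ξ
      rw [(kgW_deriv a ξ).hasFDerivAt.fderiv]
      simp
    rw [this]
    exact (ContinuousLinearMap.hasTemperateGrowth
      (ContinuousLinearMap.toSpanSingletonCLE (𝕜 := ℝ) (E := ℂ)).toContinuousLinearMap).comp
        (kgE_temp a)
  · intro ξ
    have := intervalIntegral.norm_integral_le_of_norm_le_const (a := 0) (b := ξ) (f := kgE a) (C := 1)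
      (fun x _ => (kgE_norm a x).le)
    rw [sub_zero] at this
    refine this.trans ?_
    simp

theorem kgW_odd (a ξ : ℝ) : kgW a (-ξ) = - kgW a ξ := by
  unfold kgW
  have h := intervalIntegral.integral_comp_neg (f := kgE a) (a := 0) (b := ξ)
  have h2 : ∀ x, kgE a (-x) = kgE a x := by intro x; simp [kgE, jap]
  simp only [h2, neg_zero] at h
  rw [h, intervalIntegral.integral_symm]

/-- The reciprocal of the derivative of the phase. -/
noncomputable def kgpsi (ξ : ℝ) : ℝ := jap ξ / ξ

theorem kgpsi_deriv {ξ : ℝ} (h : 0 < ξ) : HasDerivAt kgpsi (-(1 / (ξ ^ 2 * jap ξ))) ξ := by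
  have := (jap_deriv ξ).div (hasDerivAt_id ξ) h.ne'
  refine HasDerivAt.congr_deriv (f := kgpsi) this ?_
  have h1 := jap_pos ξ
  have h2 := jap_sq ξ
  simp only [id]
  field_simp
  linarith

theorem kg_osc (a δ ξ : ℝ) (hδ : 0 < δ) (hξ : δ ≤ ξ) :
    |a| * ‖∫ s in δ..ξ, kgE a s‖ ≤ 2 * kgpsi δ := by
  have hu : Set.uIcc δ ξ = Set.Icc δ ξ := Set.uIcc_of_le hξ
  have hpos : ∀ s ∈ Set.uIcc δ ξ, 0 < s := fun s hs => by
    rw [hu] at hs; exact hδ.trans_le hs.1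
  have hjc : Continuous jap := by unfold jap; fun_prop
  have hc1 : ContinuousOn (fun s : ℝ => -(1 / (s ^ 2 * jap s))) (Set.uIcc δ ξ) := by
    refine ContinuousOn.neg (ContinuousOn.div continuousOn_const (by fun_prop) ?_)
    intro s hs
    have := hpos s hs
    have := jap_pos s
    positivity
  have hi1 : IntervalIntegrable (fun s : ℝ => -(1 / (s ^ 2 * jap s))) volume δ ξ :=
    hc1.intervalIntegrable
  have hi1' : IntervalIntegrable (fun s : ℝ => ((-(1 / (s ^ 2 * jap s)) : ℝ) : ℂ)) volume δ ξ :=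
    (Complex.continuous_ofReal.comp_continuousOn hc1).intervalIntegrable
  have hi2 : IntervalIntegrable (fun s : ℝ => (a * (Complex.I * s / jap s * kgE a s) : ℂ)) volume δ ξ := by
    apply Continuous.intervalIntegrable
    have := kgE_cont a
    have h3 : ∀ s, (jap s : ℂ) ≠ 0 := fun s => by exact_mod_cast (jap_pos s).ne'
    have h4 : Continuous (fun s => (jap s : ℂ)) := by fun_prop
    exact continuous_const.mul (((continuous_const.mul Complex.continuous_ofReal).div h4 h3).mul this)
  have ibp := intervalIntegral.integral_mul_deriv_eq_deriv_mul (a := δ) (b := ξ)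
    (u := fun s => ((kgpsi s : ℝ) : ℂ)) (v := kgE a)
    (u' := fun s => ((-(1 / (s ^ 2 * jap s)) : ℝ) : ℂ))
    (fun s hs => (kgpsi_deriv (hpos s hs)).ofReal_comp) (fun s _ => kgE_deriv a s) hi1' hi2
  have e1 : ∫ s in δ..ξ, ((kgpsi s : ℝ) : ℂ) * (a * (Complex.I * s / jap s * kgE a s)) =
      (a * Complex.I) * ∫ s in δ..ξ, kgE a s := by
    rw [← intervalIntegral.integral_const_mul]
    apply intervalIntegral.integral_congr
    intro s hs
    have h1 : (s : ℂ) ≠ 0 := by exact_mod_cast (hpos s hs).ne'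
    have h2 : (jap s : ℂ) ≠ 0 := by exact_mod_cast (jap_pos s).ne'
    simp only [kgpsi]
    push_cast
    field_simp
  have e2 : ‖∫ s in δ..ξ, ((-(1 / (s ^ 2 * jap s)) : ℝ) : ℂ) * kgE a s‖ ≤ kgpsi δ - kgpsi ξ := by
    have hF : ∫ s in δ..ξ, -(1 / (s ^ 2 * jap s)) = kgpsi ξ - kgpsi δ :=
      intervalIntegral.integral_eq_sub_of_hasDerivAt (fun s hs => kgpsi_deriv (hpos s hs)) hi1
    have : kgpsi δ - kgpsi ξ = ∫ s in δ..ξ, -(-(1 / (s ^ 2 * jap s))) := by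
      rw [intervalIntegral.integral_neg, hF]; ring
    rw [this]
    refine intervalIntegral.norm_integral_le_of_norm_le hξ ?_ hi1.neg
    refine Filter.Eventually.of_forall fun s hs => ?_
    rw [norm_mul, kgE_norm, mul_one, Complex.norm_real, norm_neg, Real.norm_of_nonneg, neg_neg]
    have := jap_pos s
    positivity
  have hpp : ∀ s, 0 < s → 0 ≤ kgpsi s := fun s hs => div_nonneg (jap_pos s).le hs.le
  have p1 := hpp δ hδ
  have p2 := hpp ξ (hδ.trans_le hξ)
  have : |a| * ‖∫ s in δ..ξ, kgE a s‖ = ‖(a * Complex.I) * ∫ s in δ..ξ, kgE a s‖ := by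
    rw [norm_mul, norm_mul, Complex.norm_I, mul_one, Complex.norm_real, Real.norm_eq_abs]
  rw [this, ← e1, ibp]
  have n1 : ∀ s, 0 < s → ‖((kgpsi s : ℝ) : ℂ) * kgE a s‖ = kgpsi s := fun s hs => by
    rw [norm_mul, kgE_norm, mul_one, Complex.norm_real, Real.norm_of_nonneg (hpp s hs)]
  have t1 := norm_sub_le (((kgpsi ξ : ℝ) : ℂ) * kgE a ξ - ((kgpsi δ : ℝ) : ℂ) * kgE a δ)
    (∫ s in δ..ξ, ((-(1 / (s ^ 2 * jap s)) : ℝ) : ℂ) * kgE a s)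
  have t2 := norm_sub_le (((kgpsi ξ : ℝ) : ℂ) * kgE a ξ) (((kgpsi δ : ℝ) : ℂ) * kgE a δ)
  rw [n1 _ hδ, n1 _ (hδ.trans_le hξ)] at t2
  linarith

theorem kgW_bound_pos (a ξ : ℝ) (ha : 1 ≤ |a|) (hξ : 0 ≤ ξ) : ‖kgW a ξ‖ ≤ 4 * |a| ^ (-(1:ℝ)/2) := by
  have ha0 : 0 < |a| := by linarith
  set δ := |a| ^ (-(1:ℝ)/2) with hδ
  have hδ0 : 0 < δ := by positivity
  have hδ1 : δ ≤ 1 := Real.rpow_le_one_of_one_le_of_nonpos ha (by norm_num)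
  have hδ2 : |a| * δ ^ 2 = 1 := by
    rw [hδ, ← Real.rpow_natCast, ← Real.rpow_mul ha0.le]
    norm_num
    rw [Real.rpow_neg_one, mul_inv_cancel₀ ha0.ne']
  have triv : ∀ η, 0 ≤ η → ‖kgW a η‖ ≤ η := fun η hη => by
    have := intervalIntegral.norm_integral_le_of_norm_le_const (a := 0) (b := η) (f := kgE a) (C := 1)
      (fun x _ => (kgE_norm a x).le)
    rwa [sub_zero, one_mul, abs_of_nonneg hη] at this
  rcases le_total ξ δ with h | h
  · have := triv ξ hξ; linarith
  · have h1 := kg_osc a δ ξ hδ0 h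
    have h2 : kgW a ξ = kgW a δ + ∫ s in δ..ξ, kgE a s := by
      unfold kgW
      rw [intervalIntegral.integral_add_adjacent_intervals] <;>
      exact (kgE_cont a).intervalIntegrable _ _
    have h3 : δ * kgpsi δ ≤ 3 / 2 := by
      rw [kgpsi, mul_div_cancel₀ _ hδ0.ne', jap]
      apply Real.sqrt_le_iff.2 ⟨by norm_num, by nlinarith⟩
    have h4 : ‖∫ s in δ..ξ, kgE a s‖ ≤ 3 * δ := by
      set X := ‖∫ s in δ..ξ, kgE a s‖
      calc X = δ * (δ * (|a| * X)) := by linear_combination -X * hδ2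
        _ ≤ δ * (δ * (2 * kgpsi δ)) := by gcongr
        _ ≤ δ * 3 := by gcongr; linarith
        _ = 3 * δ := by ring
    have := norm_add_le (kgW a δ) (∫ s in δ..ξ, kgE a s)
    have := triv δ hδ0.le
    rw [h2]; linarith

theorem kgW_bound (a ξ : ℝ) (ha : 1 ≤ |a|) : ‖kgW a ξ‖ ≤ 4 * |a| ^ (-(1:ℝ)/2) := by
  rcases le_total 0 ξ with h | h
  · exact kgW_bound_pos a ξ ha h
  · have := kgW_bound_pos a (-ξ) ha (by linarith)
    rwa [kgW_odd, norm_neg] at this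

theorem kg_w_bounds (x : ℝ) : 0 ≤ jap x ^ (-(2:ℝ)) ∧ jap x ^ (-(2:ℝ)) ≤ 1 ∧
    |x| * jap x ^ (-(2:ℝ)) ≤ 1 ∧ x ^ 2 * jap x ^ (-(2:ℝ)) ≤ 1 := by
  have e : jap x ^ (-(2:ℝ)) = (1 + x ^ 2)⁻¹ := by
    rw [Real.rpow_neg (jap_pos x).le, ← jap_sq]
    norm_num
  rw [e]
  refine ⟨by positivity, ?_, ?_, ?_⟩
  · exact inv_le_one_of_one_le₀ (by nlinarith)
  · rw [← div_eq_mul_inv, div_le_one (by positivity)]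
    nlinarith [sq_abs x, sq_nonneg (|x| - 1)]
  · rw [← div_eq_mul_inv, div_le_one (by positivity)]
    linarith

theorem kg_final (F : ℝ → ℂ) (f : ℝ → ℂ) (K : ℝ) (hK : 0 ≤ K)
    (h : ∫ x, ‖F x‖ ^ 2 ≤ K ^ 2 * ∫ x, ‖f x‖ ^ 2) : L2C F ≤ K * L2C f := by
  unfold L2C
  calc Real.sqrt (∫ x, ‖F x‖ ^ 2) ≤ Real.sqrt (K ^ 2 * ∫ x, ‖f x‖ ^ 2) := Real.sqrt_le_sqrt h
    _ = K * Real.sqrt (∫ x, ‖f x‖ ^ 2) := by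
      rw [Real.sqrt_mul (by positivity), Real.sqrt_sq hK]

theorem kg_three (a b c : ℂ) : ‖a + b + c‖ ^ 2 ≤ 3 * (‖a‖ ^ 2 + ‖b‖ ^ 2 + ‖c‖ ^ 2) := by
  have h := norm_add₃_le (a := a) (b := b) (c := c)
  have : ‖a + b + c‖ ^ 2 ≤ (‖a‖ + ‖b‖ + ‖c‖) ^ 2 := by gcongr
  nlinarith [sq_nonneg (‖a‖ - ‖b‖), sq_nonneg (‖a‖ - ‖c‖), sq_nonneg (‖b‖ - ‖c‖)]

theorem kg_main_large (a : ℝ) (ha : 1 ≤ |a|) (f g : 𝓢(ℝ, ℂ))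
    (hg : ∀ z, g z = ((jap z ^ (-(2 : ℝ)) : ℝ) : ℂ) * f z) :
    ∫ x, ‖((jap x ^ (-(2 : ℝ)) : ℝ) : ℂ) *
      IFT (fun ξ => Complex.I * ξ / jap ξ * kgE a ξ * kgFT g ξ) x‖ ^ 2
      ≤ (17 * |a| ^ (-(3:ℝ)/2)) ^ 2 * ∫ x, ‖f x‖ ^ 2 := by
  have ha0 : 0 < |a| := by linarith
  have hac : (a : ℂ) ≠ 0 := by
    have : a ≠ 0 := abs_pos.1 ha0
    exact_mod_cast this
  have ht : (fun z : ℝ => -(Complex.I * z)).HasTemperateGrowth := by fun_prop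
  set g1 := kgMul (fun z => -(Complex.I * z)) g with hg1
  set g2 := kgMul (fun z => -(Complex.I * z)) g1 with hg2
  set N := ∫ x, ‖f x‖ ^ 2 with hN
  have hN0 : 0 ≤ N := integral_nonneg fun x => by positivity
  have b0 : ∫ x, ‖kgFT g x‖ ^ 2 ≤ N := by
    simp only [kgFT_apply, kg_plancherel]
    have := kg_sq_le (u := fun z => ((jap z ^ (-(2 : ℝ)) : ℝ) : ℂ)) f 1 (fun x => by
      rw [Complex.norm_real, Real.norm_of_nonneg (kg_w_bounds x).1]; exact (kg_w_bounds x).2.1)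
    simpa only [← hg, one_pow, one_mul] using this
  have b1 : ∫ x, ‖kgFT g1 x‖ ^ 2 ≤ N := by
    simp only [kgFT_apply, kg_plancherel]
    have := kg_sq_le (u := fun z => -(Complex.I * z) * ((jap z ^ (-(2 : ℝ)) : ℝ) : ℂ)) f 1
      (fun x => by
        rw [norm_mul, norm_neg, norm_mul, Complex.norm_I, Complex.norm_real, Complex.norm_real,
          Real.norm_of_nonneg (kg_w_bounds x).1, one_mul]
        exact (kg_w_bounds x).2.2.1)
    simpa only [hg1, kgMul_coe ht, mul_assoc, ← hg, one_pow, one_mul] using this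
  have b2 : ∫ x, ‖kgFT g2 x‖ ^ 2 ≤ N := by
    simp only [kgFT_apply, kg_plancherel]
    have := kg_sq_le (u := fun z => -(Complex.I * z) * (-(Complex.I * z) *
        ((jap z ^ (-(2 : ℝ)) : ℝ) : ℂ))) f 1
      (fun x => by
        rw [norm_mul, norm_mul, norm_neg, norm_mul, Complex.norm_I, Complex.norm_real,
          Complex.norm_real, Real.norm_of_nonneg (kg_w_bounds x).1, one_mul, ← mul_assoc,
          Real.norm_eq_abs, ← sq, sq_abs]
        exact (kg_w_bounds x).2.2.2)
    simpa only [hg2, hg1, kgMul_coe ht, mul_assoc, ← hg, one_pow, one_mul] using this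
  set M := 4 * |a| ^ (-(1:ℝ)/2) with hM
  obtain ⟨iA, bA⟩ := kg_IFT_mul_bound (kgW_temp a) (kgFT g) M (fun ξ => kgW_bound a ξ ha)
  obtain ⟨iB, bB⟩ := kg_IFT_mul_bound (kgW_temp a) (kgFT g1) M (fun ξ => kgW_bound a ξ ha)
  obtain ⟨iC, bC⟩ := kg_IFT_mul_bound (kgW_temp a) (kgFT g2) M (fun ξ => kgW_bound a ξ ha)
  set A := IFT (fun ξ => kgW a ξ * kgFT g ξ) with hA
  set B := IFT (fun ξ => kgW a ξ * kgFT g1 ξ) with hB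
  set D := IFT (fun ξ => kgW a ξ * kgFT g2 ξ) with hD
  have hmt : (fun ξ : ℝ => (a : ℂ) * (Complex.I * ξ / jap ξ * kgE a ξ)).HasTemperateGrowth :=
    (Function.HasTemperateGrowth.const (a : ℂ)).mul (kgm_temp a)
  have id : ∀ x : ℝ, IFT (fun ξ => Complex.I * ξ / jap ξ * kgE a ξ * kgFT g ξ) x =
      (a : ℂ)⁻¹ * (-(x : ℂ) ^ 2 * A x + 2 * (Complex.I * x) * B x + D x) := by
    intro x
    have e1 := kg_ibp (kgE_temp a) hmt (kgE_deriv a) (kgFT g) (kgFT g1) (kg_FT_deriv g) x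
    have e2 := kg_ibp (kgW_temp a) (kgE_temp a) (kgW_deriv a) (kgFT g) (kgFT g1) (kg_FT_deriv g) x
    have e3 := kg_ibp (kgW_temp a) (kgE_temp a) (kgW_deriv a) (kgFT g1) (kgFT g2) (kg_FT_deriv g1) x
    rw [e2, e3, ← hA, ← hB, ← hD] at e1
    have e4 : IFT (fun ξ => (a : ℂ) * (Complex.I * ξ / jap ξ * kgE a ξ) * kgFT g ξ) x =
        a * IFT (fun ξ => Complex.I * ξ / jap ξ * kgE a ξ * kgFT g ξ) x := by
      unfold IFT
      rw [mul_left_comm, ← integral_const_mul (a : ℂ)]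
      congr 2
      ext ξ
      ring
    rw [e4] at e1
    rw [eq_inv_mul_iff_mul_eq₀ hac, e1]
    linear_combination (x : ℂ) ^ 2 * A x * Complex.I_sq
  have hpt : ∀ x : ℝ, ‖((jap x ^ (-(2 : ℝ)) : ℝ) : ℂ) *
      IFT (fun ξ => Complex.I * ξ / jap ξ * kgE a ξ * kgFT g ξ) x‖ ^ 2 ≤
      3 * (|a| ^ 2)⁻¹ * (‖A x‖ ^ 2 + 4 * ‖B x‖ ^ 2 + ‖D x‖ ^ 2) := by
    intro x
    obtain ⟨w0, w1, w2, w3⟩ := kg_w_bounds x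
    rw [id]
    set w := jap x ^ (-(2:ℝ))
    have := kg_three (-(((x ^ 2 * w : ℝ)) : ℂ) * A x) (2 * Complex.I * ((x * w : ℝ) : ℂ) * B x)
      ((w : ℂ) * D x)
    rw [show (w : ℂ) * ((a : ℂ)⁻¹ * (-(x : ℂ) ^ 2 * A x + 2 * (Complex.I * x) * B x + D x)) =
      (a : ℂ)⁻¹ * (-(((x ^ 2 * w : ℝ)) : ℂ) * A x + (2 * Complex.I * ((x * w : ℝ) : ℂ) * B x) +
        (w : ℂ) * D x) by push_cast; ring]
    rw [norm_mul, mul_pow, norm_inv, Complex.norm_real, Real.norm_eq_abs, inv_pow,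
      mul_comm (3 : ℝ), mul_assoc (|a| ^ 2)⁻¹]
    refine mul_le_mul_of_nonneg_left (this.trans ?_) (by positivity)
    have n1 : ‖-(((x ^ 2 * w : ℝ)) : ℂ) * A x‖ ≤ 1 * ‖A x‖ := by
      rw [norm_mul, norm_neg, Complex.norm_real, Real.norm_of_nonneg (by positivity)]
      gcongr
    have n2 : ‖2 * Complex.I * ((x * w : ℝ) : ℂ) * B x‖ ≤ 2 * ‖B x‖ := by
      rw [norm_mul, norm_mul, norm_mul, Complex.norm_I, Complex.norm_real, Real.norm_eq_abs,
        abs_mul, abs_of_nonneg w0, Complex.norm_ofNat]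
      gcongr
      linarith
    have n3 : ‖(w : ℂ) * D x‖ ≤ 1 * ‖D x‖ := by
      rw [norm_mul, Complex.norm_real, Real.norm_of_nonneg w0]
      gcongr
    have m1 := pow_le_pow_left₀ (norm_nonneg _) n1 2
    have m2 := pow_le_pow_left₀ (norm_nonneg _) n2 2
    have m3 := pow_le_pow_left₀ (norm_nonneg _) n3 2
    rw [mul_pow] at m1 m2 m3
    linarith
  have hsumInt : Integrable (fun x => ‖A x‖ ^ 2 + 4 * ‖B x‖ ^ 2 + ‖D x‖ ^ 2) :=
    (iA.add (iB.const_mul 4)).add iC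
  have hM2 : M ^ 2 * (|a| ^ 2)⁻¹ = 16 * (|a| ^ (-(3:ℝ)/2)) ^ 2 := by
    have h1 : |a| ^ (-(3:ℝ)/2) = |a| ^ (-(1:ℝ)/2) * |a|⁻¹ := by
      rw [← Real.rpow_neg_one, ← Real.rpow_add ha0]
      norm_num
    rw [hM, h1]
    ring
  calc _ ≤ ∫ x, 3 * (|a| ^ 2)⁻¹ * (‖A x‖ ^ 2 + 4 * ‖B x‖ ^ 2 + ‖D x‖ ^ 2) :=
        integral_mono_of_nonneg (Filter.Eventually.of_forall fun x => by positivity)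
          (hsumInt.const_mul _) (Filter.Eventually.of_forall hpt)
    _ = 3 * (|a| ^ 2)⁻¹ * ((∫ x, ‖A x‖ ^ 2) + 4 * (∫ x, ‖B x‖ ^ 2) + ∫ x, ‖D x‖ ^ 2) := by
        rw [integral_const_mul, integral_add (by exact iA.add (iB.const_mul 4)) iC,
          integral_add iA (iB.const_mul 4), integral_const_mul]
    _ ≤ 3 * (|a| ^ 2)⁻¹ * (M ^ 2 * N + 4 * (M ^ 2 * N) + M ^ 2 * N) := by
        have q0 := mul_le_mul_of_nonneg_left b0 (sq_nonneg M)
        have q1 := mul_le_mul_of_nonneg_left b1 (sq_nonneg M)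
        have q2 := mul_le_mul_of_nonneg_left b2 (sq_nonneg M)
        gcongr <;> linarith
    _ = 18 * (M ^ 2 * (|a| ^ 2)⁻¹) * N := by ring
    _ ≤ _ := by
        rw [hM2, mul_pow, ← mul_assoc]
        gcongr
        norm_num

theorem kg_main_small (a : ℝ) (f g : 𝓢(ℝ, ℂ))
    (hg : ∀ z, g z = ((jap z ^ (-(2 : ℝ)) : ℝ) : ℂ) * f z) :
    ∫ x, ‖((jap x ^ (-(2 : ℝ)) : ℝ) : ℂ) *
      IFT (fun ξ => Complex.I * ξ / jap ξ * kgE a ξ * kgFT g ξ) x‖ ^ 2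
      ≤ 1 ^ 2 * ∫ x, ‖f x‖ ^ 2 := by
  obtain ⟨i1, b1⟩ := kg_IFT_mul_bound (kgm_temp a) (kgFT g) 1 (kgm_norm a)
  have hw : ∀ x, ‖((jap x ^ (-(2 : ℝ)) : ℝ) : ℂ)‖ ≤ 1 := fun x => by
      rw [Complex.norm_real, Real.norm_of_nonneg (kg_w_bounds x).1]; exact (kg_w_bounds x).2.1
  have b0 : ∫ x, ‖kgFT g x‖ ^ 2 ≤ 1 ^ 2 * ∫ x, ‖f x‖ ^ 2 := by
    simp only [kgFT_apply, kg_plancherel]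
    have := kg_sq_le (u := fun z => ((jap z ^ (-(2 : ℝ)) : ℝ) : ℂ)) f 1 hw
    simpa only [← hg] using this
  refine le_trans ?_ (b1.trans (by linarith))
  refine integral_mono_of_nonneg (Filter.Eventually.of_forall fun x => by positivity) i1
    (Filter.Eventually.of_forall fun x => ?_)
  simp only [norm_mul (((jap x ^ (-(2 : ℝ)) : ℝ) : ℂ))]
  gcongr
  exact mul_le_of_le_one_left (norm_nonneg _) (hw x)

/-- Improved pointwise-in-time local decay:
`‖⟨·⟩^{-2} (∂_x/⟨∇⟩) e^{±it⟨∇⟩} (⟨·⟩^{-2} f)‖_{L²} ≤ C ⟨t⟩^{-3/2} ‖f‖_{L²}`. -/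
theorem local_decay_klein_gordon_derivative :
    ∃ C : ℝ, 1 ≤ C ∧
      ∀ σ : ℝ, (σ = 1 ∨ σ = -1) → ∀ (t : ℝ) (f : SchwartzMap ℝ ℂ),
        L2C (fun x => ((jap x ^ (-(2 : ℝ)) : ℝ) : ℂ) *
            Mop (fun ξ => Complex.I * (ξ : ℂ) / (jap ξ : ℂ) *
                Complex.exp (Complex.I * (σ : ℂ) * (t : ℂ) * (jap ξ : ℂ)))
              (fun z => ((jap z ^ (-(2 : ℝ)) : ℝ) : ℂ) * f z) x)
          ≤ C * jap t ^ (-(3 : ℝ) / 2) * L2C (fun x => f x) := by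
  refine ⟨100, by norm_num, fun σ hσ t f => ?_⟩
  have hwt : (fun z : ℝ => (((jap z ^ (-(2 : ℝ)) : ℝ) : ℂ))).HasTemperateGrowth :=
    Function.HasTemperateGrowth.comp Function.Complex.hasTemperateGrowth_ofReal (jap_temp_rpow _)
  set g := kgMul (fun z => ((jap z ^ (-(2 : ℝ)) : ℝ) : ℂ)) f with hgdef
  have hgc := kgMul_coe hwt f
  have hg : ∀ z, g z = ((jap z ^ (-(2 : ℝ)) : ℝ) : ℂ) * f z := fun z => congrFun hgc z
  have hMop : Mop (fun ξ => Complex.I * (ξ : ℂ) / (jap ξ : ℂ) *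
                Complex.exp (Complex.I * (σ : ℂ) * (t : ℂ) * (jap ξ : ℂ)))
              (fun z => ((jap z ^ (-(2 : ℝ)) : ℝ) : ℂ) * f z) =
      IFT (fun ξ => Complex.I * ξ / jap ξ * kgE (σ * t) ξ * kgFT g ξ) := by
    unfold Mop
    congr 1
    ext ξ
    rw [kgFT_apply, hgdef, hgc, kgE]
    push_cast
    rw [mul_assoc Complex.I (σ : ℂ) (t : ℂ)]
  rw [hMop]
  have habs : |σ * t| = |t| := by
    rcases hσ with h | h <;> simp [h]
  have hL : 0 ≤ L2C (fun x => f x) := Real.sqrt_nonneg _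
  have hj := jap_pos t
  have two : (1 / 4 : ℝ) ≤ 2 ^ (-(3:ℝ)/2) := by
    calc (1 / 4 : ℝ) = 2 ^ (-(2:ℝ)) := by
          rw [Real.rpow_neg (by norm_num)]; norm_num
      _ ≤ _ := Real.rpow_le_rpow_of_exponent_le (by norm_num) (by norm_num)
  rcases le_total 1 |t| with h | h
  · have h0 : 0 < |t| := by linarith
    have := kg_final _ (fun x => f x) (17 * |t| ^ (-(3:ℝ)/2)) (by positivity)
      (by have := kg_main_large (σ * t) (by rw [habs]; exact h) f g hg; rwa [habs] at this)
    refine this.trans (mul_le_mul_of_nonneg_right ?_ hL)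
    have hj2 : jap t ≤ 2 * |t| := by
      rw [jap, Real.sqrt_le_iff]
      exact ⟨by positivity, by nlinarith [sq_abs t]⟩
    have := Real.rpow_le_rpow_of_nonpos hj hj2 (show (-(3:ℝ)/2) ≤ 0 by norm_num)
    rw [Real.mul_rpow (by norm_num) h0.le] at this
    have h5 : 0 < |t| ^ (-(3:ℝ)/2) := by positivity
    nlinarith
  · have := kg_final _ (fun x => f x) 1 (by positivity) (kg_main_small (σ * t) f g hg)
    refine this.trans (mul_le_mul_of_nonneg_right ?_ hL)
    have hj2 : jap t ≤ 2 := by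
      rw [jap, Real.sqrt_le_iff]
      exact ⟨by positivity, by nlinarith [sq_abs t, abs_nonneg t]⟩
    have := Real.rpow_le_rpow_of_nonpos hj hj2 (show (-(3:ℝ)/2) ≤ 0 by norm_num)
    linarith
end
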